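/- Let h > 0. If (W, ω') with ω' > 0 and W ∈ C²([0, ω']) solves the stationary problem: W''(η) + (η/2)·W'(η) = 0 on (0, ω'), −W'(0) = h, W(ω') = 0, and ω'/2 = −W'(ω'), then ω' is the unique positive root ω of h = (x/2)·e^{x²/4} and W(η) = h·∫_η^ω e^{−s²/4} ds for all η ∈ [0, ω]. -/

import Mathlib

/-- Let `h > 0`. If `(W, ω')` with `ω' > 0` and `W ∈ C²([0, ω'])` solves the
stationary problem (ODE-P), then `ω'` is the unique positive root of
`h = (x/2) * exp (x^2/4)` and `W η = h * ∫ s in η..ω', exp (-s^2/4)` on `[0, ω']`. -/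
theorem stationary_solution_unique
    (h ω' : ℝ) (hh : 0 < h) (hω' : 0 < ω') (W : ℝ → ℝ)
    (hreg : ContDiffOn ℝ 2 W (Set.Icc 0 ω'))
    (hode : ∀ η ∈ Set.Ioo 0 ω',
      derivWithin (derivWithin W (Set.Icc 0 ω')) (Set.Icc 0 ω') η
        + η / 2 * derivWithin W (Set.Icc 0 ω') η = 0)
    (hbc0 : -derivWithin W (Set.Icc 0 ω') 0 = h)
    (hbcω : W ω' = 0)
    (hfb : ω' / 2 = -derivWithin W (Set.Icc 0 ω') ω') :
    (h = ω' / 2 * Real.exp (ω' ^ 2 / 4)) ∧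
    (∀ ω : ℝ, 0 < ω → h = ω / 2 * Real.exp (ω ^ 2 / 4) → ω = ω') ∧
    (∀ η ∈ Set.Icc 0 ω', W η = h * ∫ s in η..ω', Real.exp (-s ^ 2 / 4)) := by
  set D := derivWithin W (Set.Icc 0 ω') with hD
  have hu : UniqueDiffOn ℝ (Set.Icc 0 ω') := uniqueDiffOn_Icc hω'
  have hD1 : ContDiffOn ℝ 1 D (Set.Icc 0 ω') := hreg.derivWithin hu (by norm_num)
  have hDd : DifferentiableOn ℝ D (Set.Icc 0 ω') := hD1.differentiableOn (by norm_num)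
  have hWd : DifferentiableOn ℝ W (Set.Icc 0 ω') := hreg.differentiableOn (by norm_num)
  have hDat : ∀ x ∈ Set.Ioo 0 ω', HasDerivAt D (-(x / 2 * D x)) x := by
    intro x hx
    have h1 := (hDd x ⟨hx.1.le, hx.2.le⟩).hasDerivWithinAt.hasDerivAt (Icc_mem_nhds hx.1 hx.2)
    have h2 := hode x hx
    refine HasDerivAt.congr_deriv (h1) ?_
    linarith
  have hWat : ∀ x ∈ Set.Ioo 0 ω', HasDerivAt W (D x) x := by
    intro x hx
    exact (hWd x ⟨hx.1.le, hx.2.le⟩).hasDerivWithinAt.hasDerivAt (Icc_mem_nhds hx.1 hx.2)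
  have hE : ∀ x : ℝ, HasDerivAt (fun y : ℝ => Real.exp (y ^ 2 / 4)) (Real.exp (x ^ 2 / 4) * (x / 2)) x := by
    intro x
    have h1 : HasDerivAt (fun y : ℝ => y ^ 2 / 4) (x / 2) x := by
      refine HasDerivAt.congr_deriv ((hasDerivAt_pow 2 x).div_const 4) ?_
      norm_num
      ring
    exact h1.exp
  have hconst : ∀ x ∈ Set.Icc 0 ω', D x * Real.exp (x ^ 2 / 4) = -h := by
    intro x hx
    rcases hx.1.eq_or_lt with h0 | h0
    · subst h0
      norm_num
      linarith
    · obtain ⟨c, hc, hc'⟩ := exists_hasDerivAt_eq_slope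
        (fun y => D y * Real.exp (y ^ 2 / 4)) (fun _ => 0) h0
        ((hDd.continuousOn.mono (Set.Icc_subset_Icc le_rfl hx.2)).mul (by fun_prop))
        (by
          intro y hy
          refine HasDerivAt.congr_deriv ((hDat y ⟨hy.1, hy.2.trans_le hx.2⟩).mul (hE y)) ?_
          ring)
      have h3 : x - 0 ≠ 0 := by linarith
      rw [eq_comm, div_eq_zero_iff] at hc'
      rcases hc' with h4 | h4
      · norm_num at h4
        linarith
      · exact absurd h4 h3
  have hroot : h = ω' / 2 * Real.exp (ω' ^ 2 / 4) := by
    have h1 := hconst ω' ⟨hω'.le, le_rfl⟩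
    rw [hfb]
    linarith
  have hmono : ∀ a b : ℝ, 0 < a → a < b →
      a / 2 * Real.exp (a ^ 2 / 4) < b / 2 * Real.exp (b ^ 2 / 4) := by
    intro a b ha hab
    have h1 : Real.exp (a ^ 2 / 4) < Real.exp (b ^ 2 / 4) := by
      apply Real.exp_lt_exp.2
      nlinarith
    have h2 := Real.exp_pos (a ^ 2 / 4)
    nlinarith
  refine ⟨hroot, ?_, ?_⟩
  · intro ω hω hr
    rcases lt_trichotomy ω ω' with h1 | h1 | h1
    · have := hmono _ _ hω h1
      linarith
    · exact h1
    · have := hmono _ _ hω' h1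
      linarith
  · intro η hη
    have hint := intervalIntegral.integral_eq_sub_of_hasDerivAt_of_le (f := W)
      (f' := fun s => -h * Real.exp (-s ^ 2 / 4)) hη.2
      (hWd.continuousOn.mono (Set.Icc_subset_Icc hη.1 le_rfl))
      (by
        intro x hx
        have hx0 : 0 < x := hη.1.trans_lt hx.1
        refine HasDerivAt.congr_deriv (hWat x ⟨hx0, hx.2⟩) ?_
        show D x = -h * Real.exp (-x ^ 2 / 4)
        rw [← hconst x ⟨hx0.le, hx.2.le⟩, mul_assoc, ← Real.exp_add]
        ring_nf
        simp)
      (Continuous.intervalIntegrable (by fun_prop) _ _)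
    rw [intervalIntegral.integral_const_mul, hbcω] at hint
    linarith
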